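/- Let λ, A, B be real numbers with λ ∉ {0, −1, −3/4}, and let a_{000} be a real or complex number with λ² a_{000}² = 9(2 + 1/λ). Define a_{200} = a_{000}(A/λ + B) / (12(1 + 1/λ)), b_{200} = (B − A(2 + 1/λ)) / (4λ(1 + 1/λ)), a_{400} = [ a_{200}(1 + 3/λ)(A + 2λ b_{200}) − λ a_{000}( B b_{200} + λ a_{200}² − b_{200}² ) ] / (10(4 + 3/λ)), and b_{400} = −[ λ a_{000} a_{200}(A + 2λ b_{200}) − 2( B b_{200} + λ a_{200}² − b_{200}² ) ] / (10(4 + 3/λ)). Then λ a_{000} a_{400} A + 2λ² a_{000}( a_{200} b_{400} + a_{400} b_{200} ) − 3 b_{400} B − 6( λ a_{200} a_{400} − b_{200} b_{400} ) = 0. -/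

import Mathlib

/-!
Substitute `x = ∑ aₖ t ^ (k - 2)` and `y = ∑ bₖ t ^ (k - 2)`, with `b₀ = -3 / λ`, into the system,
writing `aₖ` and `bₖ` for `a_{k00}` and `b_{k00}`. At order six the unknowns `(a₆, b₆)` enter
through the singular matrix `!![6, 2 * λ * a₀; 2 * λ * a₀, 12 + 6 / λ]`, and (B8) is the pairing of
the remaining terms with its null vector `(λ * a₀, -3) = λ • (a₀, b₀)`. The force derives from a
cubic potential, so its linear and quadratic parts are symmetric; moving them from `(a₄, b₄)` onto
`(a₀, b₀)` turns the pairing into a linear form in `(a₄, b₄)` whose coefficients are multiples of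
the recurrence equations at order two. There the second derivative contributes nothing, because
`(k - 2) * (k - 3)` vanishes at `k = 2`.
-/

namespace HenonHeiles

theorem compatibility_eq_recurrence_order_two {R : Type*} [CommRing R]
    (lam A B a000 a200 b200 a400 b400 : R) :
    lam * a000 * a400 * A + 2 * lam ^ 2 * a000 * (a200 * b400 + a400 * b200) - 3 * b400 * B -
        6 * (lam * a200 * a400 - b200 * b400) =
      lam * a400 * (A * a000 + 2 * lam * a000 * b200 - 6 * a200) +
        b400 * (2 * lam ^ 2 * a000 * a200 + 6 * b200 - 3 * B) := by
  ring

variable {K : Type*} [Field K] {lam A B a000 a200 b200 : K}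

theorem x_recurrence_order_two (h2 : (2 : K) ≠ 0) (h3 : (3 : K) ≠ 0)
    (hlam0 : lam ≠ 0) (hlam1 : lam ≠ -1)
    (ha200 : a200 = a000 * (A / lam + B) / (12 * (1 + 1 / lam)))
    (hb200 : b200 = (B - A * (2 + 1 / lam)) / (4 * lam * (1 + 1 / lam))) :
    A * a000 + 2 * lam * a000 * b200 - 6 * a200 = 0 := by
  have hlam_add_one : lam + 1 ≠ 0 := add_eq_zero_iff_eq_neg.not.mpr hlam1
  rw [ha200, hb200, show (12 : K) = 2 * 2 * 3 by norm_num, show (4 : K) = 2 * 2 by norm_num]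
  field_simp
  ring

-- The equation is multiplied by `lam` to clear the denominator of `b₀ = -3 / lam`.
theorem y_recurrence_order_two (h2 : (2 : K) ≠ 0) (h3 : (3 : K) ≠ 0)
    (hlam0 : lam ≠ 0) (hlam1 : lam ≠ -1)
    (ha000 : lam ^ 2 * a000 ^ 2 = 9 * (2 + 1 / lam))
    (ha200 : a200 = a000 * (A / lam + B) / (12 * (1 + 1 / lam)))
    (hb200 : b200 = (B - A * (2 + 1 / lam)) / (4 * lam * (1 + 1 / lam))) :
    2 * lam ^ 2 * a000 * a200 + 6 * b200 - 3 * B = 0 := by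
  have hlam_add_one : lam + 1 ≠ 0 := add_eq_zero_iff_eq_neg.not.mpr hlam1
  rw [ha200, hb200, show (12 : K) = 2 * 2 * 3 by norm_num, show (4 : K) = 2 * 2 by norm_num]
  field_simp at ha000 ⊢
  linear_combination 2 * (A + lam * B) * ha000

end HenonHeiles

open HenonHeiles in
theorem compatibility_B8_general {K : Type*} [Field K] (h2 : (2 : K) ≠ 0) (h3 : (3 : K) ≠ 0)
    {lam A B a000 a200 b200 : K} (hlam0 : lam ≠ 0) (hlam1 : lam ≠ -1)
    (ha000 : lam ^ 2 * a000 ^ 2 = 9 * (2 + 1 / lam))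
    (ha200 : a200 = a000 * (A / lam + B) / (12 * (1 + 1 / lam)))
    (hb200 : b200 = (B - A * (2 + 1 / lam)) / (4 * lam * (1 + 1 / lam)))
    (a400 b400 : K) :
    lam * a000 * a400 * A + 2 * lam ^ 2 * a000 * (a200 * b400 + a400 * b200) - 3 * b400 * B -
      6 * (lam * a200 * a400 - b200 * b400) = 0 := by
  rw [compatibility_eq_recurrence_order_two,
    x_recurrence_order_two h2 h3 hlam0 hlam1 ha200 hb200,
    y_recurrence_order_two h2 h3 hlam0 hlam1 ha000 ha200 hb200, mul_zero, mul_zero, add_zero]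

/-- Compatibility condition (B8) at the resonance `(k,l,m) = (6,0,0)` of Appendix B of
the paper, verified from the explicitly computed lower-order coefficients (B9). -/
theorem compatibility_B8 (lam A B : ℝ)
    (hlam0 : lam ≠ 0) (hlam1 : lam ≠ -1) (hlam2 : lam ≠ -3 / 4)
    (a000 a200 b200 a400 b400 : ℂ)
    (ha000 : (lam : ℂ) ^ 2 * a000 ^ 2 = 9 * (2 + 1 / (lam : ℂ)))
    (ha200 : a200 = a000 * ((A : ℂ) / (lam : ℂ) + (B : ℂ)) / (12 * (1 + 1 / (lam : ℂ))))
    (hb200 : b200 = ((B : ℂ) - (A : ℂ) * (2 + 1 / (lam : ℂ))) /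
        (4 * (lam : ℂ) * (1 + 1 / (lam : ℂ))))
    (ha400 : a400 = (a200 * (1 + 3 / (lam : ℂ)) * ((A : ℂ) + 2 * (lam : ℂ) * b200) -
          (lam : ℂ) * a000 * ((B : ℂ) * b200 + (lam : ℂ) * a200 ^ 2 - b200 ^ 2)) /
        (10 * (4 + 3 / (lam : ℂ))))
    (hb400 : b400 = -(((lam : ℂ) * a000 * a200 * ((A : ℂ) + 2 * (lam : ℂ) * b200) -
          2 * ((B : ℂ) * b200 + (lam : ℂ) * a200 ^ 2 - b200 ^ 2)) /
        (10 * (4 + 3 / (lam : ℂ))))) :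
    (lam : ℂ) * a000 * a400 * (A : ℂ) +
      2 * (lam : ℂ) ^ 2 * a000 * (a200 * b400 + a400 * b200) -
      3 * b400 * (B : ℂ) -
      6 * ((lam : ℂ) * a200 * a400 - b200 * b400) = 0 :=
  compatibility_B8_general two_ne_zero three_ne_zero (mod_cast hlam0) (mod_cast hlam1)
    ha000 ha200 hb200 a400 b400
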